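/- Let C be a coalgebra over a field K and let σ, τ : C × C → K be bilinear forms. Define linear maps δ_σ, δ_τ, μ : C⊗C → C by δ_σ(c⊗d) = c₁σ(c₂, d) − σ(c, d₁)d₂, δ_τ(c⊗d) = c₁τ(c₂, d) − τ(c, d₁)d₂, and μ(c⊗d) = c₁σ(c₂, d) − τ(c, d₁)d₂. Then (C, δ_σ, δ_τ, μ) is a covariant bialgebra if and only if, for all c, d, e ∈ C: c₁·(σ(c₂₁, e)σ(c₂₂, d) − σ(c₂, d₁)σ(d₂, e) + τ(d, e₁)σ(c₂, e₂)) = (τ(c₁, e₁)σ(c₂, d) − τ(c, d₁)τ(d₂, e₁) + τ(d, e₁₁)τ(c, e₁₂))·e₂. -/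

import Mathlib

open TensorProduct

noncomputable section

variable {K : Type*} [Field K] {C : Type*} [AddCommGroup C] [Module K C]

/-- Coassociativity of a comultiplication (no counit assumed). -/
def Coassoc (Δ : C →ₗ[K] C ⊗[K] C) : Prop :=
  ∀ c : C, (TensorProduct.assoc K C C C) (TensorProduct.map Δ LinearMap.id (Δ c)) =
    TensorProduct.map LinearMap.id Δ (Δ c)

/-- Rota-Baxter cosystem conditions. -/
def IsRBCosystem (Δ : C →ₗ[K] C ⊗[K] C) (Q T : C →ₗ[K] C) : Prop :=
  (∀ c : C, TensorProduct.map Q Q (Δ c) =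
      TensorProduct.map Q LinearMap.id (Δ (Q c)) +
      TensorProduct.map LinearMap.id T (Δ (Q c))) ∧
  (∀ c : C, TensorProduct.map T T (Δ c) =
      TensorProduct.map Q LinearMap.id (Δ (T c)) +
      TensorProduct.map LinearMap.id T (Δ (T c)))

/-- Non-degeneracy of a coalgebra. -/
def Nondegenerate (Δ : C →ₗ[K] C ⊗[K] C) : Prop :=
  ∀ f : C →ₗ[K] C,
    ((∀ c : C, TensorProduct.map LinearMap.id f (Δ c) = 0) ∨
     (∀ c : C, TensorProduct.map f LinearMap.id (Δ c) = 0)) → f = 0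

/-- `pairApply f g (x ⊗ y) = f x * g y`. -/
def pairApply (f g : C →ₗ[K] K) : C ⊗[K] C →ₗ[K] K :=
  TensorProduct.lift ((LinearMap.mul K K).compl₁₂ f g)

/-- Coassociative Yang–Baxter pair. -/
def IsCYBP (Δ : C →ₗ[K] C ⊗[K] C) (σ τ : C →ₗ[K] C →ₗ[K] K) : Prop :=
  (∀ c d e : C, pairApply (σ.flip e) (σ.flip d) (Δ c)
      - pairApply (σ c) (σ.flip e) (Δ d) + pairApply (τ d) (σ c) (Δ e) = 0) ∧
  (∀ c d e : C, pairApply (τ.flip e) (σ.flip d) (Δ c)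
      - pairApply (τ c) (τ.flip e) (Δ d) + pairApply (τ d) (τ c) (Δ e) = 0)

/-- Swap of the first two tensor factors of `C ⊗ (C ⊗ C)`. -/
def swapFirstTwo : C ⊗[K] (C ⊗[K] C) →ₗ[K] C ⊗[K] (C ⊗[K] C) :=
  (TensorProduct.assoc K C C C).toLinearMap ∘ₗ
    LinearMap.rTensor C (TensorProduct.comm K C C).toLinearMap ∘ₗ
    (TensorProduct.assoc K C C C).symm.toLinearMap

/-- `contract13 σ (x ⊗ (y ⊗ z)) = σ x z • y`. -/
def contract13 (σ : C →ₗ[K] C →ₗ[K] K) : C ⊗[K] (C ⊗[K] C) →ₗ[K] C :=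
  (TensorProduct.rid K C).toLinearMap ∘ₗ
    LinearMap.lTensor C (TensorProduct.lift σ) ∘ₗ swapFirstTwo

/-- `muForm Δ σ τ (c ⊗ d) = σ(c₂,d) • c₁ − τ(c,d₁) • d₂`. -/
def muForm (Δ : C →ₗ[K] C ⊗[K] C) (σ τ : C →ₗ[K] C →ₗ[K] K) :
    C ⊗[K] C →ₗ[K] C :=
  ((TensorProduct.rid K C).toLinearMap ∘ₗ
      LinearMap.lTensor C (TensorProduct.lift σ) ∘ₗ
      (TensorProduct.assoc K C C C).toLinearMap ∘ₗ LinearMap.rTensor C Δ)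
  - ((TensorProduct.lid K C).toLinearMap ∘ₗ
      LinearMap.rTensor C (TensorProduct.lift τ) ∘ₗ
      (TensorProduct.assoc K C C C).symm.toLinearMap ∘ₗ LinearMap.lTensor C Δ)

/-- Coderivation condition for a multiplication-like map on a coalgebra. -/
def IsCoderivation (Δ : C →ₗ[K] C ⊗[K] C) (δ : C ⊗[K] C →ₗ[K] C) : Prop :=
  ∀ c d : C, Δ (δ (c ⊗ₜ d)) =
    LinearMap.lTensor C (δ ∘ₗ (TensorProduct.mk K C C).flip d) (Δ c) +
    LinearMap.rTensor C (δ ∘ₗ TensorProduct.mk K C C c) (Δ d)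

/-- Covariant coderivation with respect to `(δ₁, δ₂)`. -/
def IsCovariant (Δ : C →ₗ[K] C ⊗[K] C) (δ₁ δ₂ μ : C ⊗[K] C →ₗ[K] C) : Prop :=
  (∀ c d : C, Δ (μ (c ⊗ₜ d)) =
      LinearMap.rTensor C (μ ∘ₗ TensorProduct.mk K C C c) (Δ d) +
      LinearMap.lTensor C (δ₁ ∘ₗ (TensorProduct.mk K C C).flip d) (Δ c)) ∧
  (∀ c d : C, Δ (μ (c ⊗ₜ d)) =
      LinearMap.lTensor C (μ ∘ₗ (TensorProduct.mk K C C).flip d) (Δ c) +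
      LinearMap.rTensor C (δ₂ ∘ₗ TensorProduct.mk K C C c) (Δ d))

/-- Associativity of a multiplication `μ : C ⊗ C →ₗ C`. -/
def IsAssocMul (μ : C ⊗[K] C →ₗ[K] C) : Prop :=
  ∀ c d e : C, μ (μ (c ⊗ₜ d) ⊗ₜ e) = μ (c ⊗ₜ μ (d ⊗ₜ e))

/-- Counit condition. -/
def IsCounit (Δ : C →ₗ[K] C ⊗[K] C) (ε : C →ₗ[K] K) : Prop :=
  ∀ c : C, (TensorProduct.lid K C) (TensorProduct.map ε LinearMap.id (Δ c)) = c ∧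
    (TensorProduct.rid K C) (TensorProduct.map LinearMap.id ε (Δ c)) = c

/-- Dendriform coalgebra conditions for `(Δr, Δl) = (Δ_≻, Δ_≺)`. -/
def IsDendriformCoalgebra (Δr Δl : C →ₗ[K] C ⊗[K] C) : Prop :=
  (∀ c : C, (TensorProduct.assoc K C C C) (TensorProduct.map Δr LinearMap.id (Δr c)) =
      TensorProduct.map LinearMap.id Δr (Δr c) + TensorProduct.map LinearMap.id Δl (Δr c)) ∧
  (∀ c : C, (TensorProduct.assoc K C C C) (TensorProduct.map Δl LinearMap.id (Δr c)) =
      TensorProduct.map LinearMap.id Δr (Δl c)) ∧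
  (∀ c : C, (TensorProduct.assoc K C C C) (TensorProduct.map Δr LinearMap.id (Δl c)) +
      (TensorProduct.assoc K C C C) (TensorProduct.map Δl LinearMap.id (Δl c)) =
      TensorProduct.map LinearMap.id Δl (Δl c))

/-- The conditions on the bilinear form `u` in Theorem 4.11. -/
def UCond (Δ : C →ₗ[K] C ⊗[K] C) (δ₁ δ₂ : C ⊗[K] C →ₗ[K] C)
    (u : C →ₗ[K] C →ₗ[K] K) : Prop :=
  (∀ c d : C, δ₁ (c ⊗ₜ d) - δ₂ (c ⊗ₜ d) =
      (TensorProduct.rid K C) (LinearMap.lTensor C (u.flip d) (Δ c)) -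
      (TensorProduct.lid K C) (LinearMap.rTensor C (u c) (Δ d))) ∧
  (∀ c d e : C, δ₁ (δ₁ (c ⊗ₜ d) ⊗ₜ e) - δ₁ (c ⊗ₜ δ₁ (d ⊗ₜ e)) =
      (TensorProduct.lid K C)
        (TensorProduct.map (u d) (δ₁ ∘ₗ TensorProduct.mk K C C c) (Δ e))) ∧
  (∀ c d e : C, u (δ₁ (c ⊗ₜ d)) e - u c (δ₁ (d ⊗ₜ e)) =
      pairApply (u d) (u c) (Δ e) - pairApply (u c) (u.flip e) (Δ d))


def RR (Δ : C →ₗ[K] C ⊗[K] C) (f : C →ₗ[K] K) : C →ₗ[K] C :=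
  (TensorProduct.rid K C).toLinearMap ∘ₗ LinearMap.lTensor C f ∘ₗ Δ

def LL (Δ : C →ₗ[K] C ⊗[K] C) (f : C →ₗ[K] K) : C →ₗ[K] C :=
  (TensorProduct.lid K C).toLinearMap ∘ₗ LinearMap.rTensor C f ∘ₗ Δ

theorem RR_apply (Δ : C →ₗ[K] C ⊗[K] C) (f : C →ₗ[K] K) (c : C) :
    (TensorProduct.rid K C) (LinearMap.lTensor C f (Δ c)) = RR Δ f c := rfl

theorem LL_apply (Δ : C →ₗ[K] C ⊗[K] C) (f : C →ₗ[K] K) (c : C) :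
    (TensorProduct.lid K C) (LinearMap.rTensor C f (Δ c)) = LL Δ f c := rfl

theorem RR_add (Δ : C →ₗ[K] C ⊗[K] C) (f g : C →ₗ[K] K) : RR Δ (f + g) = RR Δ f + RR Δ g := by
  ext; simp [RR, LinearMap.lTensor_add]

theorem RR_sub (Δ : C →ₗ[K] C ⊗[K] C) (f g : C →ₗ[K] K) : RR Δ (f - g) = RR Δ f - RR Δ g := by
  ext; simp [RR, LinearMap.lTensor_sub]

theorem LL_add (Δ : C →ₗ[K] C ⊗[K] C) (f g : C →ₗ[K] K) : LL Δ (f + g) = LL Δ f + LL Δ g := by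
  ext; simp [LL, LinearMap.rTensor_add]

theorem LL_sub (Δ : C →ₗ[K] C ⊗[K] C) (f g : C →ₗ[K] K) : LL Δ (f - g) = LL Δ f - LL Δ g := by
  ext; simp [LL, LinearMap.rTensor_sub]

/-- `y ↦ t₁ σ(t₂, y)` -/
def NN (σ : C →ₗ[K] C →ₗ[K] K) (t : C ⊗[K] C) : C →ₗ[K] C where
  toFun y := TensorProduct.rid K C (LinearMap.lTensor C (σ.flip y) t)
  map_add' x y := by simp [LinearMap.lTensor_add]
  map_smul' a y := by simp [LinearMap.lTensor_smul]

/-- `x ↦ σ(x, t₁) t₂` -/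
def MM (σ : C →ₗ[K] C →ₗ[K] K) (t : C ⊗[K] C) : C →ₗ[K] C where
  toFun x := TensorProduct.lid K C (LinearMap.rTensor C (σ x) t)
  map_add' x y := by simp [LinearMap.rTensor_add]
  map_smul' a y := by simp [LinearMap.rTensor_smul]

theorem cross (σ : C →ₗ[K] C →ₗ[K] K) (t s : C ⊗[K] C) :
    LinearMap.rTensor C (NN σ t) s = LinearMap.lTensor C (MM σ s) t := by
  induction s with
  | zero =>
    have : MM σ (0 : C ⊗[K] C) = 0 := by ext; simp [MM]
    simp [this]
  | add a b ha hb =>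
    have : MM σ (a + b) = MM σ a + MM σ b := by ext; simp [MM]
    simp [this, ha, hb, LinearMap.lTensor_add]
  | tmul d e =>
    induction t with
    | zero =>
      have : NN σ (0 : C ⊗[K] C) = 0 := by ext; simp [NN]
      simp [this]
    | add a b ha hb =>
      have : NN σ (a + b) = NN σ a + NN σ b := by ext; simp [NN]
      simp [this, ha, hb, LinearMap.rTensor_add]
    | tmul x y => simp [NN, MM, TensorProduct.smul_tmul]

theorem muForm_tmul (Δ : C →ₗ[K] C ⊗[K] C) (σ τ : C →ₗ[K] C →ₗ[K] K) (c d : C) :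
    muForm Δ σ τ (c ⊗ₜ d) = RR Δ (σ.flip d) c - LL Δ (τ c) d := by
  have h1 : ∀ t : C ⊗[K] C, LinearMap.lTensor C (TensorProduct.lift σ)
      (TensorProduct.assoc K C C C (t ⊗ₜ d)) = LinearMap.lTensor C (σ.flip d) t := by
    intro t
    induction t with
    | zero => simp
    | add a b ha hb => simp [TensorProduct.add_tmul, ha, hb]
    | tmul x y => simp
  have h2 : ∀ t : C ⊗[K] C, LinearMap.rTensor C (TensorProduct.lift τ)
      ((TensorProduct.assoc K C C C).symm (c ⊗ₜ t)) = LinearMap.rTensor C (τ c) t := by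
    intro t
    induction t with
    | zero => simp
    | add a b ha hb => simp [TensorProduct.tmul_add, ha, hb]
    | tmul x y => simp
  simp [muForm, RR, LL, h1, h2]

theorem mu_left (Δ : C →ₗ[K] C ⊗[K] C) (σ τ : C →ₗ[K] C →ₗ[K] K) (c : C) :
    muForm Δ σ τ ∘ₗ TensorProduct.mk K C C c = NN σ (Δ c) - LL Δ (τ c) := by
  ext d; simp [muForm_tmul, NN, RR_apply]

theorem mu_right (Δ : C →ₗ[K] C ⊗[K] C) (σ τ : C →ₗ[K] C →ₗ[K] K) (d : C) :
    muForm Δ σ τ ∘ₗ (TensorProduct.mk K C C).flip d = RR Δ (σ.flip d) - MM τ (Δ d) := by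
  ext c; simp [muForm_tmul, MM, LL_apply]

theorem D_RR (Δ : C →ₗ[K] C ⊗[K] C) (hΔ : Coassoc Δ) (f : C →ₗ[K] K) (c : C) :
    Δ (RR Δ f c) = LinearMap.lTensor C (RR Δ f) (Δ c) := by
  have h := congrArg (LinearMap.lTensor C
    ((TensorProduct.rid K C).toLinearMap ∘ₗ LinearMap.lTensor C f)) (hΔ c)
  have h1 : ∀ t : C ⊗[K] C, LinearMap.lTensor C
    ((TensorProduct.rid K C).toLinearMap ∘ₗ LinearMap.lTensor C f)
      (TensorProduct.map LinearMap.id Δ t) = LinearMap.lTensor C (RR Δ f) t := by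
    intro t
    induction t with
    | zero => simp
    | add a b ha hb => simp only [map_add, ha, hb]
    | tmul x y => simp [RR]
  have h2 : ∀ (s : C ⊗[K] C) (y : C), LinearMap.lTensor C
    ((TensorProduct.rid K C).toLinearMap ∘ₗ LinearMap.lTensor C f)
      (TensorProduct.assoc K C C C (s ⊗ₜ y)) = f y • s := by
    intro s y
    induction s with
    | zero => simp
    | add a b ha hb => simp only [TensorProduct.add_tmul, map_add, ha, hb, smul_add]
    | tmul x z => simp
  have h3 : ∀ t : C ⊗[K] C, LinearMap.lTensor C
    ((TensorProduct.rid K C).toLinearMap ∘ₗ LinearMap.lTensor C f)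
      (TensorProduct.assoc K C C C (TensorProduct.map Δ LinearMap.id t)) =
      Δ (TensorProduct.rid K C (LinearMap.lTensor C f t)) := by
    intro t
    induction t with
    | zero => simp
    | add a b ha hb => simp only [map_add, ha, hb]
    | tmul x y => rw [TensorProduct.map_tmul, LinearMap.id_apply, h2]; simp
  rw [h1, h3] at h
  exact h

theorem D_LL (Δ : C →ₗ[K] C ⊗[K] C) (hΔ : Coassoc Δ) (f : C →ₗ[K] K) (c : C) :
    Δ (LL Δ f c) = LinearMap.rTensor C (LL Δ f) (Δ c) := by
  have h := congrArg (fun u => LinearMap.rTensor C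
    ((TensorProduct.lid K C).toLinearMap ∘ₗ LinearMap.rTensor C f)
      ((TensorProduct.assoc K C C C).symm u)) (hΔ c)
  simp only [LinearEquiv.symm_apply_apply] at h
  have h1 : ∀ t : C ⊗[K] C, LinearMap.rTensor C
    ((TensorProduct.lid K C).toLinearMap ∘ₗ LinearMap.rTensor C f)
      (TensorProduct.map Δ LinearMap.id t) = LinearMap.rTensor C (LL Δ f) t := by
    intro t
    induction t with
    | zero => simp
    | add a b ha hb => simp only [map_add, ha, hb]
    | tmul x y => simp [LL]
  have h2 : ∀ (s : C ⊗[K] C) (y : C), LinearMap.rTensor C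
    ((TensorProduct.lid K C).toLinearMap ∘ₗ LinearMap.rTensor C f)
      ((TensorProduct.assoc K C C C).symm (y ⊗ₜ s)) = f y • s := by
    intro s y
    induction s with
    | zero => simp
    | add a b ha hb => simp only [TensorProduct.tmul_add, map_add, ha, hb, smul_add]
    | tmul x z => simp [TensorProduct.smul_tmul']
  have h3 : ∀ t : C ⊗[K] C, LinearMap.rTensor C
    ((TensorProduct.lid K C).toLinearMap ∘ₗ LinearMap.rTensor C f)
      ((TensorProduct.assoc K C C C).symm (TensorProduct.map LinearMap.id Δ t)) =
      Δ (TensorProduct.lid K C (LinearMap.rTensor C f t)) := by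
    intro t
    induction t with
    | zero => simp
    | add a b ha hb => simp only [map_add, ha, hb]
    | tmul x y => rw [TensorProduct.map_tmul, LinearMap.id_apply, h2]; simp
  rw [h1, h3] at h
  exact h.symm

theorem LL_RR (Δ : C →ₗ[K] C ⊗[K] C) (hΔ : Coassoc Δ) (f g : C →ₗ[K] K) (c : C) :
    LL Δ f (RR Δ g c) = RR Δ g (LL Δ f c) := by
  rw [← LL_apply, D_RR Δ hΔ]
  have : ∀ t : C ⊗[K] C, TensorProduct.lid K C (LinearMap.rTensor C f
      (LinearMap.lTensor C (RR Δ g) t)) =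
      RR Δ g (TensorProduct.lid K C (LinearMap.rTensor C f t)) := by
    intro t
    induction t with
    | zero => simp
    | add a b ha hb => simp only [map_add, ha, hb]
    | tmul x y => simp
  rw [this, LL_apply]

theorem pair_RR (Δ : C →ₗ[K] C ⊗[K] C) (hΔ : Coassoc Δ) (f g : C →ₗ[K] K) (c : C) :
    RR Δ (pairApply f g ∘ₗ Δ) c = RR Δ f (RR Δ g c) := by
  rw [← RR_apply Δ f, D_RR Δ hΔ, ← RR_apply, ← LinearMap.lTensor_comp_apply]
  congr 3
  ext x
  have : ∀ t : C ⊗[K] C, pairApply f g t =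
      f (TensorProduct.rid K C (LinearMap.lTensor C g t)) := by
    intro t
    induction t with
    | zero => simp
    | add a b ha hb => simp only [map_add, ha, hb]
    | tmul x y => simp [pairApply, mul_comm]
  simp [this, RR]

theorem pair_LL (Δ : C →ₗ[K] C ⊗[K] C) (hΔ : Coassoc Δ) (f g : C →ₗ[K] K) (c : C) :
    LL Δ (pairApply f g ∘ₗ Δ) c = LL Δ g (LL Δ f c) := by
  rw [← LL_apply Δ g, D_LL Δ hΔ, ← LL_apply, ← LinearMap.rTensor_comp_apply]
  congr 3
  ext x
  have : ∀ t : C ⊗[K] C, pairApply f g t =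
      g (TensorProduct.lid K C (LinearMap.rTensor C f t)) := by
    intro t
    induction t with
    | zero => simp
    | add a b ha hb => simp only [map_add, ha, hb]
    | tmul x y => simp [pairApply]
  simp [this, LL]

theorem mu_cov1 (Δ : C →ₗ[K] C ⊗[K] C) (hΔ : Coassoc Δ) (σ τ : C →ₗ[K] C →ₗ[K] K) (c d : C) :
    Δ (muForm Δ σ τ (c ⊗ₜ d)) =
      LinearMap.rTensor C (muForm Δ σ τ ∘ₗ TensorProduct.mk K C C c) (Δ d) +
      LinearMap.lTensor C (muForm Δ σ σ ∘ₗ (TensorProduct.mk K C C).flip d) (Δ c) := by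
  rw [mu_left, mu_right, muForm_tmul, map_sub, D_RR Δ hΔ, D_LL Δ hΔ, LinearMap.rTensor_sub,
    LinearMap.lTensor_sub, LinearMap.sub_apply, LinearMap.sub_apply, cross]
  abel

theorem mu_cov2 (Δ : C →ₗ[K] C ⊗[K] C) (hΔ : Coassoc Δ) (σ τ : C →ₗ[K] C →ₗ[K] K) (c d : C) :
    Δ (muForm Δ σ τ (c ⊗ₜ d)) =
      LinearMap.lTensor C (muForm Δ σ τ ∘ₗ (TensorProduct.mk K C C).flip d) (Δ c) +
      LinearMap.rTensor C (muForm Δ τ τ ∘ₗ TensorProduct.mk K C C c) (Δ d) := by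
  rw [mu_left, mu_right, muForm_tmul, map_sub, D_RR Δ hΔ, D_LL Δ hΔ, LinearMap.rTensor_sub,
    LinearMap.lTensor_sub, LinearMap.sub_apply, LinearMap.sub_apply, cross]
  abel

/-- Theorem 4.13: `(C, δ_σ, δ_τ, μ)` is a covariant bialgebra iff
Eq. (4.20) holds. -/
theorem covariant_bialgebra_iff_eq420
    (Δ : C →ₗ[K] C ⊗[K] C) (hΔ : Coassoc Δ)
    (σ τ : C →ₗ[K] C →ₗ[K] K) :
    (IsCoderivation Δ (muForm Δ σ σ) ∧ IsCoderivation Δ (muForm Δ τ τ) ∧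
      IsAssocMul (muForm Δ σ τ) ∧
      IsCovariant Δ (muForm Δ σ σ) (muForm Δ τ τ) (muForm Δ σ τ)) ↔
    (∀ c d e : C,
      (TensorProduct.rid K C) (LinearMap.lTensor C
        (pairApply (σ.flip e) (σ.flip d) ∘ₗ Δ
          - σ.flip ((TensorProduct.rid K C) (LinearMap.lTensor C (σ.flip e) (Δ d)))
          + σ.flip ((TensorProduct.lid K C) (LinearMap.rTensor C (τ d) (Δ e)))) (Δ c)) =
      (TensorProduct.lid K C) (LinearMap.rTensor C
        (τ ((TensorProduct.rid K C) (LinearMap.lTensor C (σ.flip d) (Δ c)))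
          - τ ((TensorProduct.lid K C) (LinearMap.rTensor C (τ c) (Δ d)))
          + pairApply (τ d) (τ c) ∘ₗ Δ) (Δ e))) := by
  refine Iff.trans (b := IsAssocMul (muForm Δ σ τ)) ⟨fun h => h.2.2.1, fun h =>
    ⟨mu_cov2 Δ hΔ σ σ, mu_cov2 Δ hΔ τ τ, h, mu_cov1 Δ hΔ σ τ, mu_cov2 Δ hΔ σ τ⟩⟩ ?_
  refine forall_congr' fun c => forall_congr' fun d => forall_congr' fun e => ?_
  simp only [RR_apply, LL_apply, muForm_tmul, RR_add, RR_sub, LL_add, LL_sub, map_sub,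
    LinearMap.add_apply, LinearMap.sub_apply, pair_RR Δ hΔ, pair_LL Δ hΔ, LL_RR Δ hΔ]
  rw [← sub_eq_zero, ← sub_eq_zero (a := _ - _ + _)]
  refine Eq.congr ?_ rfl
  abel


end
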